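/- Let (T0, T̃0) be a joint pair of abstract Friedrichs operators on a complex Hilbert space H. If a subspace V of the graph space W is maximal non-negative in (W, [·|·]) (i.e. V ⊆ W⁺ and no subspace of W contained in W⁺ properly contains V), then V satisfies (V)-boundary conditions, that is, with Ṽ := V^[⊥] one has Ṽ ⊆ W⁻ and V = Ṽ^[⊥]. -/

import Mathlib

open scoped InnerProductSpace
open Filter Topology LinearPMap

noncomputable section

variable {H : Type*} [NormedAddCommGroup H] [InnerProductSpace ℂ H] [CompleteSpace H]

/-- The inner product used in the paper (antilinear in the **second** entry):
`pInner x y = ⟪y, x⟫` in Mathlib's convention. -/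
def pInner {H : Type*} [NormedAddCommGroup H] [InnerProductSpace ℂ H] (x y : H) : ℂ :=
  ⟪y, x⟫_ℂ

/-- A pair of densely defined operators with common domain satisfying conditions (T1) and (T2). -/
structure IsDualPairT12 (T0 T0t : H →ₗ.[ℂ] H) (lam : ℝ) : Prop where
  dom_eq : T0.domain = T0t.domain
  dense' : Dense (T0.domain : Set H)
  sym : ∀ (φ : T0.domain) (ψ : T0t.domain), pInner (T0 φ) (ψ : H) = pInner (φ : H) (T0t ψ)
  lam_pos : 0 < lam
  bound : ∀ (x : H) (hx : x ∈ T0.domain),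
    ‖T0 ⟨x, hx⟩ + T0t ⟨x, dom_eq.le hx⟩‖ ≤ 2 * lam * ‖x‖

/-- A joint pair of abstract Friedrichs operators: (T1), (T2) and (T3). -/
structure IsFriedrichsPair (T0 T0t : H →ₗ.[ℂ] H) (lam mu : ℝ)
    extends IsDualPairT12 T0 T0t lam : Prop where
  mu_pos : 0 < mu
  coercive : ∀ (x : H) (hx : x ∈ T0.domain),
    2 * mu * ‖x‖ ^ 2 ≤ (pInner (T0 ⟨x, hx⟩ + T0t ⟨x, dom_eq.le hx⟩) x).re

/-- The boundary form `[u|v] := ⟨T₁u , v⟩ − ⟨u , T̃₁v⟩` on the graph space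
`W := dom T₁ = dom (T̃₀)*`.  The hypothesis `hW` expresses the fact `dom T₁ = dom T̃₁`. -/
def bform (T0 T0t : H →ₗ.[ℂ] H) (hW : T0t.adjoint.domain = T0.adjoint.domain)
    (u v : T0t.adjoint.domain) : ℂ :=
  pInner (T0t.adjoint u) (v : H) - pInner (u : H) (T0.adjoint ⟨(v : H), hW.le v.2⟩)

/-- `X^[⊥]`, the `[·|·]`-orthogonal complement of `X ⊆ W` in the graph space. -/
def iorth (T0 T0t : H →ₗ.[ℂ] H) (hW : T0t.adjoint.domain = T0.adjoint.domain)
    (X : Set ↥T0t.adjoint.domain) : Set ↥T0t.adjoint.domain :=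
  {u | ∀ v ∈ X, bform T0 T0t hW u v = 0}

/-- `W⁺ = {u ∈ W : [u|u] ≥ 0}`. -/
def Wplus (T0 T0t : H →ₗ.[ℂ] H) (hW : T0t.adjoint.domain = T0.adjoint.domain) :
    Set ↥T0t.adjoint.domain :=
  {u | 0 ≤ (bform T0 T0t hW u u).re}

/-- `W⁻ = {u ∈ W : [u|u] ≤ 0}`. -/
def Wminus (T0 T0t : H →ₗ.[ℂ] H) (hW : T0t.adjoint.domain = T0.adjoint.domain) :
    Set ↥T0t.adjoint.domain :=
  {u | (bform T0 T0t hW u u).re ≤ 0}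

/-- (V)-boundary conditions for a subset `V` of the graph space `W`. -/
def VBC (T0 T0t : H →ₗ.[ℂ] H) (hW : T0t.adjoint.domain = T0.adjoint.domain)
    (V : Set ↥T0t.adjoint.domain) : Prop :=
  V ⊆ Wplus T0 T0t hW ∧ iorth T0 T0t hW V ⊆ Wminus T0 T0t hW ∧
    V = iorth T0 T0t hW (iorth T0 T0t hW V)

/-- The graph norm `‖u‖_{T₁} = ‖u‖ + ‖T₁ u‖` on the graph space. -/
def gnorm (T0t : H →ₗ.[ℂ] H) (u : T0t.adjoint.domain) : ℝ :=
  ‖(u : H)‖ + ‖T0t.adjoint u‖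

/-- The distance associated with the graph norm. -/
def gdist (T0t : H →ₗ.[ℂ] H) (u v : T0t.adjoint.domain) : ℝ := gnorm T0t (u - v)

/-- Closedness (sequential) in the graph-norm topology of `W`. -/
def GClosed (T0t : H →ₗ.[ℂ] H) (X : Set ↥T0t.adjoint.domain) : Prop :=
  ∀ f : ℕ → ↥T0t.adjoint.domain, (∀ n, f n ∈ X) →
    ∀ l, Tendsto (fun n => gdist T0t (f n) l) atTop (𝓝 0) → l ∈ X

/-- `W₀` (the domain of the closure of `T₀`), viewed as a subset of the graph space `W`. -/
def W0set (T0 T0t : H →ₗ.[ℂ] H) : Set ↥T0t.adjoint.domain :=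
  {u | (u : H) ∈ T0.closure.domain}

/-- The graph inner product on `W` (in the paper's convention). -/
def gip (T0t : H →ₗ.[ℂ] H) (u v : ↥T0t.adjoint.domain) : ℂ :=
  pInner (u : H) (v : H) + pInner (T0t.adjoint u) (T0t.adjoint v)

/-- The (Hilbert) orthogonal complement of `W₀` in the graph space. -/
def W0perp (T0 T0t : H →ₗ.[ℂ] H) : Set ↥T0t.adjoint.domain :=
  {u | ∀ v : ↥T0t.adjoint.domain, (v : H) ∈ T0.closure.domain → gip T0t u v = 0}

/-- `ker T₁` as a subset of the graph space. -/
def kerT1set (T0t : H →ₗ.[ℂ] H) : Set ↥T0t.adjoint.domain := {u | T0t.adjoint u = 0}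

/-- `ker T̃₁` as a subset of the graph space. -/
def kerT1tset (T0 T0t : H →ₗ.[ℂ] H) (hW : T0t.adjoint.domain = T0.adjoint.domain) :
    Set ↥T0t.adjoint.domain :=
  {u | T0.adjoint ⟨(u : H), hW.le u.2⟩ = 0}

/-- An operator `M ∈ L(W;W')`, encoded through the pairing `m u v = ⟨Mu, v⟩_{W',W}`
(linear in `u`, antilinear in `v`, and bounded with respect to the graph norm). -/
structure MOp (T0t : H →ₗ.[ℂ] H) where
  m : ↥T0t.adjoint.domain → ↥T0t.adjoint.domain → ℂ
  add_left : ∀ u v w, m (u + v) w = m u w + m v w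
  smul_left : ∀ (c : ℂ) (u w), m (c • u) w = c * m u w
  add_right : ∀ u v w, m u (v + w) = m u v + m u w
  smul_right : ∀ (c : ℂ) (u w), m u (c • w) = starRingEnd ℂ c * m u w
  bounded : ∃ C, ∀ u v, ‖m u v‖ ≤ C * (gnorm T0t u * gnorm T0t v)

/-- The (M)-boundary conditions for a pairing `m u v = ⟨Mu, v⟩_{W',W}`:
(M1) non-negativity and (M2) `W = ker (D − M) + ker (D + M)`. -/
def MBC (T0 T0t : H →ₗ.[ℂ] H) (hW : T0t.adjoint.domain = T0.adjoint.domain)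
    (m : ↥T0t.adjoint.domain → ↥T0t.adjoint.domain → ℂ) : Prop :=
  (∀ u, 0 ≤ (m u u).re) ∧
  (∀ w : ↥T0t.adjoint.domain, ∃ a b : ↥T0t.adjoint.domain,
    (∀ v, bform T0 T0t hW a v = m a v) ∧ (∀ v, bform T0 T0t hW b v + m b v = 0) ∧ w = a + b)

/-- `ker (D − M)` for a pairing `m`. -/
def kerDsubM (T0 T0t : H →ₗ.[ℂ] H) (hW : T0t.adjoint.domain = T0.adjoint.domain)
    (m : ↥T0t.adjoint.domain → ↥T0t.adjoint.domain → ℂ) : Set ↥T0t.adjoint.domain :=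
  {u | ∀ v, bform T0 T0t hW u v = m u v}

/-- `ker (D + M)` for a pairing `m`. -/
def kerDaddM (T0 T0t : H →ₗ.[ℂ] H) (hW : T0t.adjoint.domain = T0.adjoint.domain)
    (m : ↥T0t.adjoint.domain → ↥T0t.adjoint.domain → ℂ) : Set ↥T0t.adjoint.domain :=
  {u | ∀ v, bform T0 T0t hW u v + m u v = 0}

/-!
Let `T₁ = T̃₀*`, `T̃₁ = T₀*`. By (T2), `T₀ + T̃₀` extends to a bounded symmetric operator `S` on
`H`, and `T̃₁ = S - T₁` on `W`. Identify `W` with the graph `G` of `T₁`, a closed subspace of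
`H × H`. Then `[·|·]` is the restriction to `G` of the form of `J (u, a) = (a - S u, u)` on `H × H`,
and this ambient form is non-degenerate because `J` is onto. Hence `X^[⊥][⊥] = X` holds in `H × H`
for every closed `X`. The complement `G^[⊥]` lies in `G`, so it is neutral and orthogonal to all of
`G`; by maximality it lies in `V`, and `V` is closed. Therefore `V^[⊥] ⊆ G^[⊥][⊥] = G`: the
complement of `V` in `H × H` is its complement in `W`, and taking it twice returns `V`. Maximality
also makes `V^[⊥]` non-positive: a vector of it with `[u|u] > 0` could be added to `V`.
-/

section HermitianForm

variable {𝕜 E : Type*} [RCLike 𝕜] [NormedAddCommGroup E] [InnerProductSpace 𝕜 E]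
variable {J : E →L[𝕜] E} {G U V : Submodule 𝕜 E} {u v : E}

/-- The orthogonal complement `V^[⊥]` of `V` with respect to the form `[u|v] = ⟪v, J u⟫` of `J`,
which is Hermitian when `J` is symmetric. -/
def formOrthogonal (J : E →L[𝕜] E) (V : Submodule 𝕜 E) : Submodule 𝕜 E :=
  Vᗮ.comap (J : E →ₗ[𝕜] E)

theorem mem_formOrthogonal : u ∈ formOrthogonal J V ↔ ∀ v ∈ V, ⟪v, J u⟫_𝕜 = 0 :=
  Submodule.mem_orthogonal _ _

theorem formOrthogonal_anti (h : U ≤ V) : formOrthogonal J V ≤ formOrthogonal J U :=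
  Submodule.comap_mono (Submodule.orthogonal_le h)

theorem formOrthogonal_eq_orthogonal_map (hJ : (J : E →ₗ[𝕜] E).IsSymmetric) :
    formOrthogonal J V = (V.map (J : E →ₗ[𝕜] E))ᗮ := by
  ext u
  have hJu : ∀ v, ⟪J v, u⟫_𝕜 = ⟪v, J u⟫_𝕜 := fun v => hJ v u
  simp only [mem_formOrthogonal, Submodule.mem_orthogonal, Submodule.mem_map,
    forall_exists_index, and_imp, forall_apply_eq_imp_iff₂, ContinuousLinearMap.coe_coe, hJu]

theorem formOrthogonal_formOrthogonal [CompleteSpace E] (hJ : (J : E →ₗ[𝕜] E).IsSymmetric)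
    (hsurj : Function.Surjective J) (hV : IsClosed (V : Set E)) :
    formOrthogonal J (formOrthogonal J V) = V := by
  have := hV.completeSpace_coe
  rw [formOrthogonal_eq_orthogonal_map hJ, formOrthogonal,
    Submodule.map_comap_eq_of_surjective hsurj, Submodule.orthogonal_orthogonal]

theorem reApplyInnerSelf_eq_zero_of_mem_formOrthogonal (hu : u ∈ V)
    (huV : u ∈ formOrthogonal J V) : J.reApplyInnerSelf u = 0 := by
  rw [ContinuousLinearMap.reApplyInnerSelf_apply, inner_re_symm, mem_formOrthogonal.1 huV u hu,
    _root_.map_zero]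

theorem reApplyInnerSelf_add_of_mem_formOrthogonal (hJ : (J : E →ₗ[𝕜] E).IsSymmetric)
    (hv : v ∈ V) (hu : u ∈ formOrthogonal J V) :
    J.reApplyInnerSelf (v + u) = J.reApplyInnerSelf v + J.reApplyInnerSelf u := by
  have hvu : ⟪v, J u⟫_𝕜 = 0 := mem_formOrthogonal.1 hu v hv
  have hJvu : ⟪J v, u⟫_𝕜 = 0 := (hJ v u).trans hvu
  have hJuv : ⟪J u, v⟫_𝕜 = 0 := inner_eq_zero_symm.1 hvu
  simp only [ContinuousLinearMap.reApplyInnerSelf_apply, _root_.map_add, inner_add_left,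
    inner_add_right, hJvu, hJuv, add_zero, zero_add]

/-- The subspace `U` is non-negative for the form of `J`, that is, `U ⊆ W⁺`. -/
def IsNonnegOn (J : E →L[𝕜] E) (U : Submodule 𝕜 E) : Prop :=
  ∀ u ∈ U, 0 ≤ J.reApplyInnerSelf u

theorem IsNonnegOn.topologicalClosure (hU : IsNonnegOn J U) :
    IsNonnegOn J U.topologicalClosure := fun _ hu =>
  closure_minimal (t := {u | 0 ≤ J.reApplyInnerSelf u}) hU
    (isClosed_le continuous_const J.reApplyInnerSelf_continuous) hu

theorem IsNonnegOn.sup_span_singleton (hJ : (J : E →ₗ[𝕜] E).IsSymmetric) (hV : IsNonnegOn J V)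
    (hu : u ∈ formOrthogonal J V) (hpos : 0 ≤ J.reApplyInnerSelf u) :
    IsNonnegOn J (V ⊔ 𝕜 ∙ u) := by
  intro w hw
  obtain ⟨v, hv, y, hy, rfl⟩ := Submodule.mem_sup.1 hw
  obtain ⟨a, rfl⟩ := Submodule.mem_span_singleton.1 hy
  rw [reApplyInnerSelf_add_of_mem_formOrthogonal hJ hv (Submodule.smul_mem _ a hu),
    ContinuousLinearMap.reApplyInnerSelf_smul]
  exact add_nonneg (hV v hv) (mul_nonneg (sq_nonneg _) hpos)

/-- `V` is maximal among the subspaces of `G` that are non-negative for the form of `J`. -/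
def IsMaximalNonneg (J : E →L[𝕜] E) (G V : Submodule 𝕜 E) : Prop :=
  Maximal (fun U => U ≤ G ∧ IsNonnegOn J U) V

namespace IsMaximalNonneg

theorem mem_of_mem_formOrthogonal (h : IsMaximalNonneg J G V)
    (hJ : (J : E →ₗ[𝕜] E).IsSymmetric) (huG : u ∈ G)
    (huV : u ∈ formOrthogonal J V) (hpos : 0 ≤ J.reApplyInnerSelf u) : u ∈ V := by
  have hle : V ⊔ 𝕜 ∙ u ≤ G := sup_le h.prop.1 ((Submodule.span_singleton_le_iff_mem u G).2 huG)
  exact h.le_of_ge ⟨hle, h.prop.2.sup_span_singleton hJ huV hpos⟩ le_sup_left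
    (Submodule.mem_sup_right (Submodule.mem_span_singleton_self u))

theorem nonpos_of_mem_formOrthogonal (h : IsMaximalNonneg J G V)
    (hJ : (J : E →ₗ[𝕜] E).IsSymmetric) (huG : u ∈ G)
    (huV : u ∈ formOrthogonal J V) : J.reApplyInnerSelf u ≤ 0 := by
  by_contra! hpos
  have huu := h.mem_of_mem_formOrthogonal hJ huG huV hpos.le
  exact hpos.ne' (reApplyInnerSelf_eq_zero_of_mem_formOrthogonal huu huV)

theorem isClosed (h : IsMaximalNonneg J G V) (hG : IsClosed (G : Set E)) :
    IsClosed (V : Set E) := by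
  have hle : V.topologicalClosure ≤ V :=
    h.le_of_ge ⟨V.topologicalClosure_minimal h.prop.1 hG, h.prop.2.topologicalClosure⟩
      V.le_topologicalClosure
  exact isClosed_of_closure_subset hle

theorem formOrthogonal_ambient_le (h : IsMaximalNonneg J G V) (hJ : (J : E →ₗ[𝕜] E).IsSymmetric)
    (hG : formOrthogonal J G ≤ G) : formOrthogonal J G ≤ V := fun _ hu =>
  h.mem_of_mem_formOrthogonal hJ (hG hu) (formOrthogonal_anti h.prop.1 hu)
    (reApplyInnerSelf_eq_zero_of_mem_formOrthogonal (hG hu) hu).ge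

theorem formOrthogonal_le_ambient [CompleteSpace E] (h : IsMaximalNonneg J G V)
    (hJ : (J : E →ₗ[𝕜] E).IsSymmetric) (hsurj : Function.Surjective J)
    (hGc : IsClosed (G : Set E)) (hG : formOrthogonal J G ≤ G) :
    formOrthogonal J V ≤ G :=
  (formOrthogonal_anti (h.formOrthogonal_ambient_le hJ hG)).trans_eq
    (formOrthogonal_formOrthogonal hJ hsurj hGc)

end IsMaximalNonneg

theorem isMaximalNonneg_map {W : Type*} [AddCommGroup W] [Module 𝕜 W] (γ : W →ₗ[𝕜] E)
    {V : Submodule 𝕜 W} (hV : Maximal (fun U : Submodule 𝕜 W => IsNonnegOn J (U.map γ)) V) :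
    IsMaximalNonneg J γ.range (V.map γ) := by
  refine ⟨⟨LinearMap.map_le_range, hV.prop⟩, fun U ⟨hUr, hU⟩ hVU => ?_⟩
  have hmap : (U.comap γ).map γ = U := Submodule.map_comap_eq_of_le hUr
  rw [← hmap] at hU ⊢
  exact Submodule.map_mono (hV.le_of_ge hU (Submodule.map_le_iff_le_comap.1 hVU))

end HermitianForm

section GraphEmbedding

variable {𝕜 E F : Type*} [RCLike 𝕜] [NormedAddCommGroup E] [InnerProductSpace 𝕜 E]
variable [NormedAddCommGroup F] [InnerProductSpace 𝕜 F]

/-- The embedding `u ↦ (u, T u)` of the domain of `T` onto its graph, as a subspace of the Hilbert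
space product `E × F`. -/
def graphEmbedding (T : E →ₗ.[𝕜] F) : T.domain →ₗ[𝕜] WithLp 2 (E × F) :=
  (WithLp.linearEquiv 2 𝕜 (E × F)).symm.toLinearMap ∘ₗ T.domain.subtype.prod T.toFun

theorem graphEmbedding_injective (T : E →ₗ.[𝕜] F) : Function.Injective (graphEmbedding T) :=
  fun _ _ huv => Subtype.ext (congrArg WithLp.fst huv)

theorem mem_range_graphEmbedding {T : E →ₗ.[𝕜] F} {p : WithLp 2 (E × F)} :
    p ∈ (graphEmbedding T).range ↔ p.ofLp ∈ T.graph := by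
  rw [LinearPMap.mem_graph_iff']
  exact exists_congr fun _ => (WithLp.linearEquiv 2 𝕜 (E × F)).symm_apply_eq

theorem isClosed_range_graphEmbedding {T : E →ₗ.[𝕜] F} (hT : T.IsClosed) :
    IsClosed ((graphEmbedding T).range : Set (WithLp 2 (E × F))) := by
  have hpre : ((graphEmbedding T).range : Set (WithLp 2 (E × F))) =
      WithLp.ofLp ⁻¹' (T.graph : Set (E × F)) := Set.ext fun _ => mem_range_graphEmbedding
  exact hpre ▸ hT.preimage (WithLp.prod_continuous_ofLp 2 E F)

theorem mem_range_graphEmbedding_adjoint [CompleteSpace E] {T : E →ₗ.[𝕜] F}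
    (hT : Dense (T.domain : Set E)) {p : WithLp 2 (F × E)} :
    p ∈ (graphEmbedding T.adjoint).range ↔ ∀ x : T.domain, ⟪p.snd, (x : E)⟫_𝕜 = ⟪p.fst, T x⟫_𝕜 := by
  rw [mem_range_graphEmbedding, LinearPMap.mem_graph_iff']
  constructor
  · rintro ⟨y, hy⟩ x
    rw [← WithLp.ofLp_fst, ← WithLp.ofLp_snd, ← hy]
    exact adjoint_isFormalAdjoint hT y x
  · intro hp
    have hmem : p.fst ∈ T.adjoint.domain := mem_adjoint_domain_of_exists _ ⟨p.snd, hp⟩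
    exact ⟨⟨p.fst, hmem⟩, Prod.ext rfl (adjoint_apply_eq hT ⟨p.fst, hmem⟩ hp)⟩

end GraphEmbedding

section BoundaryOperator

variable {𝕜 E : Type*} [RCLike 𝕜] [NormedAddCommGroup E] [InnerProductSpace 𝕜 E]

/-- The operator `J (u, a) = (a - S u, u)`. If `T̃₁ = S - T₁`, then its form restricts to the
boundary form `⟨T₁ u, v⟩ - ⟨u, T̃₁ v⟩` on the graph of `T₁`. -/
def boundaryOperator (S : E →L[𝕜] E) : WithLp 2 (E × E) →L[𝕜] WithLp 2 (E × E) :=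
  (WithLp.prodContinuousLinearEquiv 2 𝕜 E E).symm.toContinuousLinearMap ∘L
    (WithLp.sndL 2 𝕜 E E - S ∘L WithLp.fstL 2 𝕜 E E).prod (WithLp.fstL 2 𝕜 E E)

theorem inner_boundaryOperator (S : E →L[𝕜] E) (p q : WithLp 2 (E × E)) :
    ⟪p, boundaryOperator S q⟫_𝕜 = ⟪p.fst, q.snd - S q.fst⟫_𝕜 + ⟪p.snd, q.fst⟫_𝕜 :=
  rfl

theorem boundaryOperator_isSymmetric {S : E →L[𝕜] E} (hS : (S : E →ₗ[𝕜] E).IsSymmetric) :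
    (boundaryOperator S : WithLp 2 (E × E) →ₗ[𝕜] WithLp 2 (E × E)).IsSymmetric := by
  intro p q
  have hSpq : ⟪S p.fst, q.fst⟫_𝕜 = ⟪p.fst, S q.fst⟫_𝕜 := hS p.fst q.fst
  calc ⟪boundaryOperator S p, q⟫_𝕜
      = ⟪p.snd - S p.fst, q.fst⟫_𝕜 + ⟪p.fst, q.snd⟫_𝕜 := rfl
    _ = ⟪p.fst, q.snd - S q.fst⟫_𝕜 + ⟪p.snd, q.fst⟫_𝕜 := by
      rw [inner_sub_left, inner_sub_right, hSpq]; ring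
    _ = ⟪p, boundaryOperator S q⟫_𝕜 := (inner_boundaryOperator S p q).symm

theorem boundaryOperator_surjective (S : E →L[𝕜] E) : Function.Surjective (boundaryOperator S) := by
  intro p
  refine ⟨WithLp.toLp 2 (p.snd, p.fst + S p.snd), ?_⟩
  exact (WithLp.linearEquiv 2 𝕜 (E × E)).injective (Prod.ext (add_sub_cancel_right _ _) rfl)

end BoundaryOperator

section BoundedExtension

variable {𝕜 E F : Type*} [RCLike 𝕜] [NormedAddCommGroup E] [InnerProductSpace 𝕜 E]
variable [NormedAddCommGroup F] [InnerProductSpace 𝕜 F]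

/-- The continuous extension to `E` of a bounded, densely defined operator `T`; it is only
meaningful for such `T`. -/
def boundedExtension [CompleteSpace F] (T : E →ₗ.[𝕜] F) : E →L[𝕜] F :=
  T.toFun.extendOfNorm T.domain.subtype

theorem boundedExtension_apply [CompleteSpace F] {T : E →ₗ.[𝕜] F}
    (hdense : Dense (T.domain : Set E))
    (hbound : ∃ C, ∀ x, ‖T x‖ ≤ C * ‖(x : E)‖) (x : T.domain) : boundedExtension T x = T x :=
  LinearMap.extendOfNorm_eq hdense.denseRange_val hbound x

theorem boundedExtension_isSymmetric [CompleteSpace E] {T : E →ₗ.[𝕜] E}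
    (hdense : Dense (T.domain : Set E))
    (hbound : ∃ C, ∀ x, ‖T x‖ ≤ C * ‖(x : E)‖) (hsymm : T.IsFormalAdjoint T) :
    (boundedExtension T : E →ₗ[𝕜] E).IsSymmetric := by
  set S := boundedExtension T
  refine isClosed_property2 (p := fun x y => ⟪S x, y⟫_𝕜 = ⟪x, S y⟫_𝕜) hdense.denseRange_val
    (isClosed_eq (by fun_prop) (by fun_prop)) fun x y => ?_
  rw [boundedExtension_apply hdense hbound, boundedExtension_apply hdense hbound]
  exact hsymm x y

end BoundedExtension

/-- The operator on `H × H` whose form restricts to the boundary form on the graph of `T₁`. -/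
abbrev bformOperator (T0 T0t : H →ₗ.[ℂ] H) : WithLp 2 (H × H) →L[ℂ] WithLp 2 (H × H) :=
  boundaryOperator (boundedExtension (T0 + T0t))

namespace IsDualPairT12

section Sum

variable {K : Type*} [NormedAddCommGroup K] [InnerProductSpace ℂ K]
variable {T0 T0t : K →ₗ.[ℂ] K} {lam : ℝ}

theorem dense_domain_right (h : IsDualPairT12 T0 T0t lam) : Dense (T0t.domain : Set K) :=
  h.dom_eq ▸ h.dense'

theorem isFormalAdjoint (h : IsDualPairT12 T0 T0t lam) : T0t.IsFormalAdjoint T0 :=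
  fun ψ φ => (h.sym φ ψ).symm

theorem dense_domain_add (h : IsDualPairT12 T0 T0t lam) : Dense ((T0 + T0t).domain : Set K) := by
  rw [LinearPMap.add_domain, inf_eq_left.2 h.dom_eq.le]
  exact h.dense'

theorem add_bounded (h : IsDualPairT12 T0 T0t lam) : ∃ C, ∀ x, ‖(T0 + T0t) x‖ ≤ C * ‖(x : K)‖ :=
  ⟨2 * lam, fun x => h.bound x x.2.1⟩

theorem add_isFormalAdjoint_self (h : IsDualPairT12 T0 T0t lam) :
    (T0 + T0t).IsFormalAdjoint (T0 + T0t) := by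
  intro x y
  rw [LinearPMap.add_apply, LinearPMap.add_apply, inner_add_left, inner_add_right, add_comm]
  exact congrArg₂ (· + ·) (h.isFormalAdjoint ⟨x, x.2.2⟩ ⟨y, y.2.1⟩)
    (h.isFormalAdjoint.symm ⟨x, x.2.1⟩ ⟨y, y.2.2⟩)

end Sum

variable {T0 T0t : H →ₗ.[ℂ] H} {lam : ℝ}

theorem le_adjoint (h : IsDualPairT12 T0 T0t lam) : T0 ≤ T0t.adjoint :=
  h.isFormalAdjoint.le_adjoint h.dense_domain_right

theorem boundedExtension_add_apply (h : IsDualPairT12 T0 T0t lam) {x : H}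
    (hx : x ∈ T0.domain) (hx' : x ∈ T0t.domain) :
    boundedExtension (T0 + T0t) x = T0 ⟨x, hx⟩ + T0t ⟨x, hx'⟩ :=
  boundedExtension_apply h.dense_domain_add h.add_bounded ⟨x, hx, hx'⟩

theorem boundedExtension_add_isSymmetric (h : IsDualPairT12 T0 T0t lam) :
    (boundedExtension (T0 + T0t) : H →ₗ[ℂ] H).IsSymmetric :=
  boundedExtension_isSymmetric h.dense_domain_add h.add_bounded h.add_isFormalAdjoint_self

theorem adjoint_add_adjoint_apply (h : IsDualPairT12 T0 T0t lam) {x : H}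
    (hx : x ∈ T0t.adjoint.domain) (hx' : x ∈ T0.adjoint.domain) :
    T0t.adjoint ⟨x, hx⟩ + T0.adjoint ⟨x, hx'⟩ = boundedExtension (T0 + T0t) x := by
  refine h.dense'.eq_of_inner_left ℂ fun φ hφ => ?_
  have hφt := h.dom_eq.le hφ
  calc ⟪T0t.adjoint ⟨x, hx⟩ + T0.adjoint ⟨x, hx'⟩, φ⟫_ℂ
      = ⟪x, T0t ⟨φ, hφt⟩⟫_ℂ + ⟪x, T0 ⟨φ, hφ⟩⟫_ℂ := by
        rw [inner_add_left, ← adjoint_isFormalAdjoint h.dense_domain_right ⟨x, hx⟩ ⟨φ, hφt⟩,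
          ← adjoint_isFormalAdjoint h.dense' ⟨x, hx'⟩ ⟨φ, hφ⟩]
    _ = ⟪x, boundedExtension (T0 + T0t) φ⟫_ℂ := by
        rw [h.boundedExtension_add_apply hφ hφt, inner_add_right, add_comm]
    _ = ⟪boundedExtension (T0 + T0t) x, φ⟫_ℂ := (h.boundedExtension_add_isSymmetric x φ).symm

theorem bformOperator_isSymmetric (h : IsDualPairT12 T0 T0t lam) :
    (bformOperator T0 T0t : WithLp 2 (H × H) →ₗ[ℂ] WithLp 2 (H × H)).IsSymmetric :=
  boundaryOperator_isSymmetric h.boundedExtension_add_isSymmetric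

theorem formOrthogonal_range_graphEmbedding_le (h : IsDualPairT12 T0 T0t lam) :
    formOrthogonal (bformOperator T0 T0t) (graphEmbedding T0t.adjoint).range ≤
      (graphEmbedding T0t.adjoint).range := by
  intro p hp
  refine (mem_range_graphEmbedding_adjoint h.dense_domain_right).2 fun ⟨φ, hφt⟩ => ?_
  have hφ := h.dom_eq.ge hφt
  set S := boundedExtension (T0 + T0t)
  have hT1 : T0t.adjoint ⟨φ, h.le_adjoint.1 hφ⟩ = T0 ⟨φ, hφ⟩ :=
    (h.le_adjoint.2 (x := ⟨φ, hφ⟩) rfl).symm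
  have horth : ⟪φ, p.snd - S p.fst⟫_ℂ + ⟪T0 ⟨φ, hφ⟩, p.fst⟫_ℂ = 0 := by
    rw [← hT1]
    exact mem_formOrthogonal.1 hp _ (LinearMap.mem_range_self _ ⟨φ, h.le_adjoint.1 hφ⟩)
  have hS : ⟪φ, S p.fst⟫_ℂ = ⟪T0 ⟨φ, hφ⟩, p.fst⟫_ℂ + ⟪T0t ⟨φ, hφt⟩, p.fst⟫_ℂ := by
    rw [← inner_add_left, ← h.boundedExtension_add_apply hφ hφt]
    exact (h.boundedExtension_add_isSymmetric φ p.fst).symm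
  have hconj : ⟪φ, p.snd⟫_ℂ = ⟪T0t ⟨φ, hφt⟩, p.fst⟫_ℂ := by
    rw [inner_sub_right] at horth
    linear_combination horth + hS
  rw [← inner_conj_symm, hconj, inner_conj_symm]

variable (hW : T0t.adjoint.domain = T0.adjoint.domain)

theorem bform_eq_inner (h : IsDualPairT12 T0 T0t lam) (u v : T0t.adjoint.domain) :
    bform T0 T0t hW u v =
      ⟪graphEmbedding T0t.adjoint v, bformOperator T0 T0t (graphEmbedding T0t.adjoint u)⟫_ℂ := by
  set S := boundedExtension (T0 + T0t)
  have hadj : T0.adjoint ⟨v, hW.le v.2⟩ = S v - T0t.adjoint v :=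
    eq_sub_of_add_eq' (h.adjoint_add_adjoint_apply v.2 (hW.le v.2))
  have hS : ⟪S v, (u : H)⟫_ℂ = ⟪(v : H), S u⟫_ℂ := h.boundedExtension_add_isSymmetric v u
  calc bform T0 T0t hW u v
      = ⟪(v : H), T0t.adjoint u⟫_ℂ - ⟪S v - T0t.adjoint v, (u : H)⟫_ℂ := by
        rw [← hadj]; rfl
    _ = ⟪(v : H), T0t.adjoint u - S u⟫_ℂ + ⟪T0t.adjoint v, (u : H)⟫_ℂ := by
        rw [inner_sub_left, inner_sub_right, hS]; ring
    _ = _ := (inner_boundaryOperator S (graphEmbedding _ v) (graphEmbedding _ u)).symm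

theorem re_bform_self (h : IsDualPairT12 T0 T0t lam) (u : T0t.adjoint.domain) :
    (bform T0 T0t hW u u).re =
      (bformOperator T0 T0t).reApplyInnerSelf (graphEmbedding T0t.adjoint u) := by
  rw [h.bform_eq_inner hW, ContinuousLinearMap.reApplyInnerSelf_apply, inner_re_symm]
  rfl

theorem subset_Wplus_iff (h : IsDualPairT12 T0 T0t lam) (U : Submodule ℂ T0t.adjoint.domain) :
    (U : Set T0t.adjoint.domain) ⊆ Wplus T0 T0t hW ↔
      IsNonnegOn (bformOperator T0 T0t) (U.map (graphEmbedding T0t.adjoint)) := by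
  simp only [Set.subset_def, SetLike.mem_coe, Wplus, Set.mem_ofPred_eq, h.re_bform_self, IsNonnegOn,
    Submodule.mem_map, forall_exists_index, and_imp, forall_apply_eq_imp_iff₂]

theorem iorth_eq_comap_formOrthogonal (h : IsDualPairT12 T0 T0t lam)
    (U : Submodule ℂ T0t.adjoint.domain) :
    iorth T0 T0t hW U =
      (formOrthogonal (bformOperator T0 T0t) (U.map (graphEmbedding T0t.adjoint))).comap
        (graphEmbedding T0t.adjoint) := by
  ext u
  simp only [iorth, Set.mem_ofPred_eq, h.bform_eq_inner, SetLike.mem_coe, Submodule.mem_comap,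
    mem_formOrthogonal, Submodule.mem_map, forall_exists_index, and_imp, forall_apply_eq_imp_iff₂]

theorem iorth_iorth_eq (h : IsDualPairT12 T0 T0t lam) (V : Submodule ℂ T0t.adjoint.domain)
    (hV : IsMaximalNonneg (bformOperator T0 T0t) (graphEmbedding T0t.adjoint).range
      (V.map (graphEmbedding T0t.adjoint))) :
    iorth T0 T0t hW (iorth T0 T0t hW V) = V := by
  set γ := graphEmbedding T0t.adjoint
  set J := bformOperator T0 T0t
  have hsurj : Function.Surjective J := boundaryOperator_surjective _
  have hγ : IsClosed (γ.range : Set (WithLp 2 (H × H))) :=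
    isClosed_range_graphEmbedding (adjoint_isClosed h.dense_domain_right)
  have hle : formOrthogonal J (V.map γ) ≤ γ.range :=
    hV.formOrthogonal_le_ambient h.bformOperator_isSymmetric hsurj hγ
      h.formOrthogonal_range_graphEmbedding_le
  rw [h.iorth_eq_comap_formOrthogonal, h.iorth_eq_comap_formOrthogonal,
    Submodule.map_comap_eq_of_le hle,
    formOrthogonal_formOrthogonal h.bformOperator_isSymmetric hsurj (hV.isClosed hγ),
    Submodule.comap_map_eq_of_injective (graphEmbedding_injective _)]

end IsDualPairT12

theorem maximal_nonneg_implies_VBC_general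
    (T0 T0t : H →ₗ.[ℂ] H) (lam : ℝ) (hT : IsDualPairT12 T0 T0t lam)
    (hW : T0t.adjoint.domain = T0.adjoint.domain)
    (V : Submodule ℂ ↥T0t.adjoint.domain)
    (hpos : (V : Set ↥T0t.adjoint.domain) ⊆ Wplus T0 T0t hW)
    (hmax : ∀ U : Submodule ℂ ↥T0t.adjoint.domain,
      (U : Set ↥T0t.adjoint.domain) ⊆ Wplus T0 T0t hW →
      (V : Set ↥T0t.adjoint.domain) ⊆ (U : Set ↥T0t.adjoint.domain) →
      (U : Set ↥T0t.adjoint.domain) = (V : Set ↥T0t.adjoint.domain)) :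
    iorth T0 T0t hW (V : Set ↥T0t.adjoint.domain) ⊆ Wminus T0 T0t hW ∧
    (V : Set ↥T0t.adjoint.domain) =
      iorth T0 T0t hW (iorth T0 T0t hW (V : Set ↥T0t.adjoint.domain)) := by
  have hV : IsMaximalNonneg (bformOperator T0 T0t) (graphEmbedding T0t.adjoint).range
      (V.map (graphEmbedding T0t.adjoint)) :=
    isMaximalNonneg_map _ ⟨(hT.subset_Wplus_iff hW V).1 hpos,
      fun U hU hVU => (hmax U ((hT.subset_Wplus_iff hW U).2 hU) hVU).le⟩
  refine ⟨fun u hu => ?_, (hT.iorth_iorth_eq hW V hV).symm⟩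
  rw [hT.iorth_eq_comap_formOrthogonal] at hu
  exact (hT.re_bform_self hW u).trans_le
    (hV.nonpos_of_mem_formOrthogonal hT.bformOperator_isSymmetric (LinearMap.mem_range_self _ u) hu)

/-- Theorem 2.6(b): if `V` is a maximal non-negative subspace of `(W, [·|·])`,
then `V` satisfies the (V)-boundary conditions. -/
theorem maximal_nonneg_implies_VBC
    (T0 T0t : H →ₗ.[ℂ] H) (lam mu : ℝ) (hF : IsFriedrichsPair T0 T0t lam mu)
    (hW : T0t.adjoint.domain = T0.adjoint.domain)
    (V : Submodule ℂ ↥T0t.adjoint.domain)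
    (hpos : (V : Set ↥T0t.adjoint.domain) ⊆ Wplus T0 T0t hW)
    (hmax : ∀ U : Submodule ℂ ↥T0t.adjoint.domain,
      (U : Set ↥T0t.adjoint.domain) ⊆ Wplus T0 T0t hW → (V : Set ↥T0t.adjoint.domain) ⊆ (U : Set ↥T0t.adjoint.domain) →
      (U : Set ↥T0t.adjoint.domain) = (V : Set ↥T0t.adjoint.domain)) :
    iorth T0 T0t hW (V : Set ↥T0t.adjoint.domain) ⊆ Wminus T0 T0t hW ∧
    (V : Set ↥T0t.adjoint.domain) = iorth T0 T0t hW (iorth T0 T0t hW (V : Set ↥T0t.adjoint.domain)) := by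
  exact maximal_nonneg_implies_VBC_general T0 T0t lam hF.toIsDualPairT12 hW V hpos hmax
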